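/- Let S be an addable abstract numeration system, let A ⊆ ℕ be a finite alphabet with 0 ∈ A, and let X ⊆ A^ℕ be a subshift that is weakly S-codable (respectively S-codable). Let Y ⊆ B^ℕ be a subshift over a finite alphabet B, let φ : Y → X be a conjugacy (a shift-commuting homeomorphism), and let b ∈ B be such that b^ω ∈ Y and φ(b^ω) = 0^ω. Then Y is weakly S-codable (respectively S-codable) with zero symbol b: there is a bijection π : B → {0, 1, …, |B| − 1} with π(b) = 0 such that the letterwise image π(Y) ⊆ ℕ^ℕ is weakly S-codable (respectively S-codable). -/

import Mathlib

open scoped BigOperators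

/-- A language is regular if it is accepted by a DFA with finitely many states. -/
def IsRegularLang {α : Type*} (L : Set (List α)) : Prop :=
  ∃ (σ : Type) (_ : Fintype σ) (M : DFA α σ), ∀ w : List α, w ∈ M.accepts ↔ w ∈ L

/-- Pad a word over `A` to length `M` by prepending the padding symbol `none`. -/
def padOne {A : Type*} (M : ℕ) (w : List A) : List (Option A) :=
  List.replicate (M - w.length) none ++ w.map some

/-- The padded form of a `d`-tuple of words over `A`, as a word over `(A ∪ {#})^d`. -/
def padTuple {A : Type*} {d : ℕ} (ws : Fin d → List A) : List (Fin d → Option A) :=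
  List.ofFn fun j : Fin (Finset.univ.sup fun i : Fin d => (ws i).length) =>
    fun i : Fin d =>
      (padOne (Finset.univ.sup fun i : Fin d => (ws i).length) (ws i)).getD j.val none

/-- An abstract numeration system over the alphabet `A`, encoded by the order isomorphism
`rep : ℕ → L ⊆ A*` enumerating its (infinite) language in increasing order. -/
structure ANS (A : Type*) where
  rep : ℕ → List A
  inj : Function.Injective rep

/-- A set `Y ⊆ ℕ^d` is `S`-recognizable if the padded representations of its members form
a regular language. -/
def ANS.Recognizable {A : Type*} (S : ANS A) {d : ℕ} (Y : Set (Fin d → ℕ)) : Prop :=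
  IsRegularLang { w : List (Fin d → Option A) | ∃ t ∈ Y, w = padTuple fun i => S.rep (t i) }

/-- An ANS is addable if the graph of addition is `S`-recognizable. -/
def ANS.Addable {A : Type*} (S : ANS A) : Prop :=
  S.Recognizable { t : Fin 3 → ℕ | t 0 + t 1 = t 2 }

/-- An ANS is comparable if the relation `≤` is `S`-recognizable. -/
def ANS.Comparable {A : Type*} (S : ANS A) : Prop :=
  S.Recognizable { t : Fin 2 → ℕ | t 0 ≤ t 1 }

/-- An ANS is regular if `ℕ` (i.e. its language) is `S`-recognizable. -/
def ANS.IsRegularANS {A : Type*} (S : ANS A) : Prop :=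
  S.Recognizable (Set.univ : Set (Fin 1 → ℕ))

/-- The unary ANS, with language `0*` ordered by length. -/
def unaryANS : ANS Unit where
  rep := fun n => List.replicate n ()
  inj := fun m n h => by simpa using congrArg List.length h

/-- `x` is `S`-automatic: some DFAO outputs `x n` on input `rep_S n`. -/
def SAutomatic {A C : Type*} (S : ANS A) (x : ℕ → C) : Prop :=
  ∃ (Q : Type) (_ : Fintype Q) (M : DFA A Q) (τ : Q → C),
    ∀ n : ℕ, τ (M.eval (S.rep n)) = x n

/-- The shift map on one-sided infinite words. -/
def shiftMap {C : Type*} (x : ℕ → C) : ℕ → C := fun n => x (n + 1)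

/-- The orbit closure of `x` (closure in the product topology over the discrete alphabet):
`y` belongs to it iff every finite prefix of `y` occurs in `x`. -/
def orbitClosure {C : Type*} (x : ℕ → C) : Set (ℕ → C) :=
  { y | ∀ n : ℕ, ∃ m : ℕ, ∀ i < n, y i = x (m + i) }

/-- A subshift: a shift-invariant subset of `C^ℕ` that is closed in the product topology
over the discrete alphabet (expressed combinatorially). -/
def IsSubshift {C : Type*} (X : Set (ℕ → C)) : Prop :=
  (∀ x ∈ X, shiftMap x ∈ X) ∧
  ∀ y : ℕ → C, (∀ n : ℕ, ∃ x ∈ X, ∀ i < n, y i = x i) → y ∈ X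

/-- The language of a set of infinite words: all finite factors of its elements. -/
def LangOf {C : Type*} (X : Set (ℕ → C)) : Set (List C) :=
  { w | ∃ x ∈ X, ∃ p : ℕ, w = List.ofFn fun i : Fin w.length => x (p + i) }

/-- A word is right special in (the language of) `X` if it has two distinct one-letter
extensions in the language of `X`. -/
def RightSpecial {C : Type*} (X : Set (ℕ → C)) (w : List C) : Prop :=
  ∃ a b : C, a ≠ b ∧ w ++ [a] ∈ LangOf X ∧ w ++ [b] ∈ LangOf X

/-- The factor complexity of `x`: the number of distinct factors of length `n`. -/
noncomputable def factorComplexity {C : Type*} (x : ℕ → C) (n : ℕ) : ℕ :=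
  Set.ncard { w : List C | ∃ p : ℕ, w = List.ofFn fun i : Fin n => x (p + i) }

/-- `T` is a strategy tree witnessing `α ∈ W(X)`: a prefix-closed set of finite words
containing the empty word, in which every word of length `i` has exactly `α i + 1`
one-letter extensions, and all whose infinite branches lie in `X`. -/
def IsStrategyTree {C : Type*} (X : Set (ℕ → C)) (α : ℕ → ℕ) (T : Set (List C)) : Prop :=
  ([] : List C) ∈ T ∧
  (∀ u v : List C, u ++ v ∈ T → u ∈ T) ∧
  (∀ w ∈ T, Set.ncard { c : C | w ++ [c] ∈ T } = α w.length + 1) ∧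
  (∀ y : ℕ → C, (∀ n : ℕ, (List.ofFn fun i : Fin n => y i) ∈ T) → y ∈ X)

/-- The winning shift of `X ⊆ C^ℕ`, a subset of `ℕ^ℕ`. -/
def winningShift {C : Type*} (X : Set (ℕ → C)) : Set (ℕ → ℕ) :=
  { α | ∃ T : Set (List C), IsStrategyTree X α T }

/-- Membership in the winning set of a set `X` of finite words, defined recursively:
`ε ∈ W(X)` iff `ε ∈ X`, and `a :: α ∈ W(X)` iff there is a set of `a + 1` letters `c`
such that `α` is in the winning set of the left quotient of `X` by `c`. -/
def winningSetMem {C : Type*} : List ℕ → Set (List C) → Prop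
  | [], X => [] ∈ X
  | a :: α, X => ∃ S : Finset C, S.card = a + 1 ∧ ∀ c ∈ S, winningSetMem α { w | c :: w ∈ X }

/-- `Σ y = m`: the sum of the letters of `y ∈ ℕ^ℕ` is finite and equals `m`. -/
def sumEq (y : ℕ → ℕ) (m : ℕ) : Prop :=
  (Function.support y).Finite ∧ ∑ᶠ i, y i = m

/-- `Y ⊆ ℕ^ℕ` has finite coding dimension: the sums `Σ y`, `y ∈ Y`, are uniformly bounded. -/
def FiniteCodingDim (Y : Set (ℕ → ℕ)) : Prop :=
  ∃ d : ℕ, ∀ y ∈ Y, ∀ F : Finset ℕ, ∑ i ∈ F, y i ≤ d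

/-- The set `{ν(y) : y ∈ Y, Σy = k} ⊆ ℕᵏ`: nondecreasing `k`-tuples `t` such that the word
whose letter at `j` is the number of occurrences of `j` in `t` belongs to `Y`. -/
def nuSet (Y : Set (ℕ → ℕ)) (k : ℕ) : Set (Fin k → ℕ) :=
  { t | Monotone t ∧ (fun j => Set.ncard { i : Fin k | t i = j }) ∈ Y }

/-- `Y ⊆ ℕ^ℕ` is weakly `S`-codable if `{ν(y) : y ∈ Y, Σy = k}` is `S`-recognizable for
every `k`. -/
def WeaklySCodable {A : Type*} (S : ANS A) (Y : Set (ℕ → ℕ)) : Prop :=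
  ∀ k : ℕ, S.Recognizable (nuSet Y k)

/-- `Y ⊆ ℕ^ℕ` is `S`-codable if it is weakly `S`-codable and has finite coding dimension. -/
def SCodable {A : Type*} (S : ANS A) (Y : Set (ℕ → ℕ)) : Prop :=
  WeaklySCodable S Y ∧ FiniteCodingDim Y

/-- `P_{111}(Y)`: strictly increasing triples `(a, b, c)` such that the word with letter `1`
exactly at positions `a`, `b`, `c` and `0` elsewhere belongs to `Y`. -/
def P111 (Y : Set (ℕ → ℕ)) : Set (Fin 3 → ℕ) :=
  { t | t 0 < t 1 ∧ t 1 < t 2 ∧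
        (fun j => if j = t 0 ∨ j = t 1 ∨ j = t 2 then 1 else 0) ∈ Y }

/-- `P_v(Y)` for a finite word `v` over `ℕ`: strictly increasing tuples `n` such that the
word with letter `v i` at position `n i` and `0` elsewhere belongs to `Y`. -/
def PvSet (v : List ℕ) (Y : Set (ℕ → ℕ)) : Set (Fin v.length → ℕ) :=
  { n | StrictMono n ∧
        (fun j => ∑ i : Fin v.length, if n i = j then v.get i else 0) ∈ Y }

/-- `X` is sofic: the set of label sequences of right-infinite paths in a finite
edge-labeled graph. -/
def IsSofic {C : Type*} (X : Set (ℕ → C)) : Prop :=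
  ∃ (V : Type) (_ : Fintype V) (E : Set (V × C × V)),
    X = { x | ∃ p : ℕ → V, ∀ n : ℕ, (p n, x n, p (n + 1)) ∈ E }

/-- The factor `x[a..b-1]` of an infinite word. -/
def segmentOf {C : Type*} (x : ℕ → C) (a b : ℕ) : List C :=
  List.ofFn fun i : Fin (b - a) => x (a + i)

/-- `U · V^ω`: infinite words that decompose as a word of `U` followed by infinitely many
nonempty words of `V`. -/
def omegaIter {C : Type*} (U V : Set (List C)) : Set (ℕ → C) :=
  { x | ∃ k : ℕ → ℕ, StrictMono k ∧ segmentOf x 0 (k 0) ∈ U ∧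
        ∀ i : ℕ, segmentOf x (k i) (k (i + 1)) ∈ V }

/-- `X ⊆ C^ℕ` is ω-regular: a finite union of sets `U · V^ω` with `U`, `V` regular. -/
def IsOmegaRegular {C : Type*} (X : Set (ℕ → C)) : Prop :=
  ∃ (n : ℕ) (U V : Fin n → Set (List C)),
    (∀ i, IsRegularLang (U i) ∧ IsRegularLang (V i)) ∧
    X = ⋃ i, omegaIter (U i) (V i)

/-- The words `p₁ = a`, `p_{k+1} = p_k bᵏ p_k` (with `a = false`, `b = true`). -/
def pWord : ℕ → List Bool
  | 0 => []
  | 1 => [false]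
  | (k + 2) => pWord (k + 1) ++ List.replicate (k + 1) true ++ pWord (k + 1)

/-- Combinatorial continuity of `φ` on `Y` for product topologies over discrete alphabets:
every finite prefix of `φ y` is determined by a finite prefix of `y`. -/
def ContOn {B C : Type*} (φ : (ℕ → B) → (ℕ → C)) (Y : Set (ℕ → B)) : Prop :=
  ∀ y ∈ Y, ∀ n : ℕ, ∃ m : ℕ, ∀ y' ∈ Y, (∀ i < m, y' i = y i) → ∀ i < n, φ y' i = φ y i

/-!
Sets of tuples recognizable in an addable numeration system are closed under first-order
definitions over `(ℕ, +)`: Boolean operations are immediate once the set of all valid encodings is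
known to be regular, and a quantifier projects away tracks of the encoding, after which superfluous
leading padding is erased.

By compactness both directions of the conjugacy are sliding block codes. The one from `Y` to `X`
fixes the zero word, so it maps a word of digit sum `k` to a word of digit sum at most some
constant `K`. A tuple therefore codes a word of `Y` of digit sum `k` exactly when it is the image,
under the local rule of the inverse block code, of a tuple coding a word of `X` of digit sum at
most `K`. Only finitely many digit sums are involved and the local rule only compares positions up
to bounded offsets, so this condition is first-order over recognizable sets.
-/

/-! ### Regular languages -/

theorem isRegularLang_iff_finite_range_residual {α : Type*} {L : Set (List α)} :
    IsRegularLang L ↔ (Set.range fun x => {w | x ++ w ∈ L}).Finite :=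
  Iff.trans (exists₃_congr fun _ _ _ => Set.ext_iff.symm)
    (Language.isRegular_iff_finite_range_leftQuotient (L := L))

namespace IsRegularLang

variable {α β : Type*} {L L₁ L₂ : Set (List α)}

theorem of_residual_eq_sUnion {F : Set (Set (List α))} (hF : F.Finite)
    (h : ∀ x, ∃ T ⊆ F, {w | x ++ w ∈ L} = ⋃₀ T) : IsRegularLang L := by
  refine isRegularLang_iff_finite_range_residual.2 ((hF.powerset.image Set.sUnion).subset ?_)
  rintro _ ⟨x, rfl⟩
  obtain ⟨T, hT, hx⟩ := h x
  exact ⟨T, hT, hx.symm⟩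

theorem comap (h : IsRegularLang L) (f : β → α) : IsRegularLang {w : List β | w.map f ∈ L} := by
  obtain ⟨σ, hσ, M, hM⟩ := h
  exact ⟨σ, hσ, M.comap f, fun w => by rw [DFA.accepts_comap]; exact hM _⟩

theorem map (h : IsRegularLang L) (f : α → β) : IsRegularLang (List.map f '' L) := by
  have hF := (isRegularLang_iff_finite_range_residual.1 h).image (List.map f '' ·)
  refine of_residual_eq_sUnion hF fun x =>
    ⟨(fun u => List.map f '' {w | u ++ w ∈ L}) '' {u | u.map f = x}, ?_, ?_⟩
  · rintro _ ⟨u, -, rfl⟩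
    exact ⟨_, ⟨u, rfl⟩, rfl⟩
  · ext w
    simp only [Set.sUnion_image, Set.mem_iUnion, exists_prop]
    constructor
    · rintro ⟨v, hv, hvw⟩
      obtain ⟨u, z, rfl, hu, hz⟩ := List.map_eq_append_iff.1 hvw
      exact ⟨u, hu, z, hv, hz⟩
    · rintro ⟨u, rfl, z, hz, rfl⟩
      exact ⟨u ++ z, hz, List.map_append⟩

theorem removePadding (h : IsRegularLang L) (a : α) :
    IsRegularLang {w | ∃ j, List.replicate j a ++ w ∈ L} := by
  refine of_residual_eq_sUnion (isRegularLang_iff_finite_range_residual.1 h) fun x =>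
    ⟨Set.range fun j => {w | List.replicate j a ++ x ++ w ∈ L}, ?_, ?_⟩
  · rintro _ ⟨j, rfl⟩
    exact ⟨_, rfl⟩
  · ext w
    simp

theorem addPadding (h : IsRegularLang L) (a : α) :
    IsRegularLang {w | ∃ j, ∃ v ∈ L, w = List.replicate j a ++ v} := by
  set P := {w | ∃ j, ∃ v ∈ L, w = List.replicate j a ++ v}
  have hF := (isRegularLang_iff_finite_range_residual.1 h).insert P
  refine of_residual_eq_sUnion hF fun x =>
    ⟨{R | (∃ j, x = List.replicate j a) ∧ R = P} ∪
      {R | ∃ j u, x = List.replicate j a ++ u ∧ R = {w | u ++ w ∈ L}}, ?_, ?_⟩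
  · rintro R (⟨-, rfl⟩ | ⟨j, u, -, rfl⟩)
    · exact Set.mem_insert _ _
    · exact Set.mem_insert_of_mem _ ⟨u, rfl⟩
  · ext w
    constructor
    · rintro ⟨j, v, hv, hw⟩
      obtain ⟨z, hz, rfl⟩ | ⟨z, rfl, rfl⟩ := List.append_eq_append_iff.1 hw
      · obtain ⟨-, hx, hz⟩ := List.replicate_eq_append_iff.1 hz
        exact ⟨P, .inl ⟨⟨_, hx⟩, rfl⟩, _, v, hv, by rw [← hz]⟩
      · exact ⟨_, .inr ⟨j, z, rfl, rfl⟩, hv⟩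
    · rintro ⟨_, ⟨⟨j, rfl⟩, rfl⟩ | ⟨j, u, rfl, rfl⟩, hw⟩
      · obtain ⟨i, v, hv, rfl⟩ := hw
        exact ⟨j + i, v, hv, by rw [List.replicate_add, List.append_assoc]⟩
      · exact ⟨j, u ++ w, hw, List.append_assoc _ _ _⟩

theorem boolean_combination {κ : Type*} [Finite κ] {L : κ → Set (List α)}
    (h : ∀ i, IsRegularLang (L i)) (F : (κ → Prop) → Prop) :
    IsRegularLang {w | F fun i => w ∈ L i} := by
  have hpi := Set.Finite.pi' fun i => isRegularLang_iff_finite_range_residual.1 (h i)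
  refine isRegularLang_iff_finite_range_residual.2
    ((hpi.image fun R => {w | F fun i => w ∈ R i}).subset ?_)
  rintro _ ⟨x, rfl⟩
  exact ⟨fun i => {w | x ++ w ∈ L i}, fun i => ⟨x, rfl⟩, rfl⟩

theorem inter (h₁ : IsRegularLang L₁) (h₂ : IsRegularLang L₂) : IsRegularLang (L₁ ∩ L₂) := by
  have h := boolean_combination (L := ![L₁, L₂]) (Fin.forall_fin_two.2 ⟨h₁, h₂⟩) fun p => p 0 ∧ p 1
  exact h

theorem singleton (v : List α) : IsRegularLang {v} := by
  have hF := (Set.finite_Iic v.length).image fun n => ({v.drop n} : Set (List α))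
  refine of_residual_eq_sUnion hF fun x => ⟨{R | x <+: v ∧ R = {v.drop x.length}}, ?_, ?_⟩
  · rintro _ ⟨hx, rfl⟩
    exact ⟨x.length, hx.length_le, rfl⟩
  · ext w
    constructor
    · rintro rfl
      exact ⟨_, ⟨List.prefix_append x w, rfl⟩, by simp⟩
    · rintro ⟨_, ⟨⟨z, rfl⟩, rfl⟩, hw⟩
      simpa using hw

theorem head?_ne (a : α) : IsRegularLang {w : List α | w.head? ≠ some a} := by
  set H := {w : List α | w.head? ≠ some a}
  refine of_residual_eq_sUnion (F := {H, Set.univ}) (Set.toFinite _) fun x => ?_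
  match x with
  | [] => exact ⟨{H}, by simp, by simp⟩
  | c :: x =>
    by_cases hc : c = a
    · exact ⟨∅, by simp, by simp [H, hc]⟩
    · exact ⟨{Set.univ}, by simp, by simp [H, hc]⟩

end IsRegularLang

/-! ### Words representing tuples -/

/-- `l` is a padding of the word `u`: the word `u` preceded by padding symbols `none`. -/
def IsPadding {A : Type*} (l : List (Option A)) (u : List A) : Prop :=
  ∃ j, l = List.replicate j none ++ u.map some

namespace IsPadding

variable {A : Type*} {l l' : List (Option A)} {u u' : List A}

theorem length_le (h : IsPadding l u) : u.length ≤ l.length := by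
  obtain ⟨j, rfl⟩ := h
  simp

theorem reduceOption_eq (h : IsPadding l u) : l.reduceOption = u := by
  obtain ⟨j, rfl⟩ := h
  simp [List.reduceOption]

theorem eq_of_length_eq (h : IsPadding l u) (h' : IsPadding l' u) (hl : l.length = l'.length) :
    l = l' := by
  obtain ⟨j, rfl⟩ := h
  obtain ⟨j', rfl⟩ := h'
  obtain rfl : j = j' := by simpa using hl
  rfl

end IsPadding

section Padding

variable {A : Type*} {ι : Type*}

theorem isPadding_cons_none {l : List (Option A)} {u : List A} :
    IsPadding (none :: l) u ↔ IsPadding l u := by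
  constructor
  · rintro ⟨_ | j, h⟩
    · cases u <;> simp at h
    · exact ⟨j, (List.cons_eq_cons.1 h).2⟩
  · rintro ⟨j, rfl⟩
    exact ⟨j + 1, rfl⟩

theorem isPadding_replicate_append {l : List (Option A)} {u : List A} (j : ℕ) :
    IsPadding (List.replicate j none ++ l) u ↔ IsPadding l u := by
  induction j with
  | zero => rfl
  | succ j ih => rw [List.replicate_succ, List.cons_append, isPadding_cons_none, ih]

theorem isPadding_padOne (M : ℕ) (u : List A) : IsPadding (padOne M u) u := ⟨_, rfl⟩

theorem length_padOne {M : ℕ} {u : List A} (h : u.length ≤ M) : (padOne M u).length = M := by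
  simp [padOne, h]

theorem eq_of_tracks_eq {v w : List (ι → Option A)} (hlen : v.length = w.length)
    (h : ∀ i, v.map (fun c => c i) = w.map (fun c => c i)) : v = w := by
  refine List.ext_getElem hlen fun n hv hw => funext fun i => ?_
  simpa [hv, hw] using congrArg (fun l => l[n]?) (h i)

theorem map_ofFn_getD {n : ℕ} {tracks : ι → List (Option A)} {i : ι}
    (h : (tracks i).length = n) :
    (List.ofFn fun (j : Fin n) i => (tracks i).getD j none).map (fun c => c i) = tracks i := by
  subst h
  refine List.ext_getElem (by simp) fun m _ hm => ?_
  simp [hm]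

end Padding

namespace ANS

variable {A : Type*} (S : ANS A) {ι κ : Type*}

/-- The word `w` over `(A ∪ {#})^ι` represents the tuple `t`: its track with index `i` is a padding
of `rep (t i)`. The tracks may share leading padding symbols, unlike in `padTuple`. -/
def Represents (w : List (ι → Option A)) (t : ι → ℕ) : Prop :=
  ∀ i, IsPadding (w.map fun c => c i) (S.rep (t i))

variable {S} {t t' : ι → ℕ} {v w : List (ι → Option A)}

namespace Represents

theorem length_rep_le (h : S.Represents w t) (i : ι) : (S.rep (t i)).length ≤ w.length := by
  simpa using (h i).length_le

theorem tuple_eq (h : S.Represents w t) (h' : S.Represents w t') : t = t' :=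
  funext fun i => S.inj ((h i).reduceOption_eq.symm.trans (h' i).reduceOption_eq)

theorem word_eq (h : S.Represents v t) (h' : S.Represents w t) (hlen : v.length = w.length) :
    v = w :=
  eq_of_tracks_eq hlen fun i => (h i).eq_of_length_eq (h' i) (by simpa using hlen)

theorem comp (h : S.Represents w t) (f : κ → ι) :
    S.Represents (w.map fun c => c ∘ f) (t ∘ f) := fun k => by
  simpa [Function.comp_def] using h (f k)

end Represents

theorem represents_replicate_append (j : ℕ) :
    S.Represents (List.replicate j (fun _ => none) ++ w) t ↔ S.Represents w t :=
  forall_congr' fun i => by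
    rw [List.map_append, List.map_replicate, isPadding_replicate_append]

theorem exists_represents_of_length_le {M : ℕ} (h : ∀ i, (S.rep (t i)).length ≤ M) :
    ∃ w, w.length = M ∧ S.Represents w t := by
  refine ⟨List.ofFn fun (j : Fin M) i => (padOne M (S.rep (t i))).getD j none, by simp, fun i => ?_⟩
  rw [map_ofFn_getD (tracks := fun i => padOne M (S.rep (t i))) (length_padOne (h i))]
  exact isPadding_padOne _ _

section PadTuple

variable {d : ℕ} {t : Fin d → ℕ} {w : List (Fin d → Option A)}

theorem represents_padTuple (t : Fin d → ℕ) : S.Represents (padTuple fun i => S.rep (t i)) t := by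
  intro i
  have hi : (S.rep (t i)).length ≤ Finset.univ.sup fun i => (S.rep (t i)).length :=
    Finset.le_sup (f := fun i => (S.rep (t i)).length) (Finset.mem_univ i)
  rw [padTuple, map_ofFn_getD (tracks := fun i => padOne _ (S.rep (t i))) (length_padOne hi)]
  exact isPadding_padOne _ _

theorem Represents.length_padTuple_le (h : S.Represents w t) :
    (padTuple fun i => S.rep (t i)).length ≤ w.length := by
  simpa [padTuple] using h.length_rep_le

theorem represents_iff_exists_eq_replicate_append_padTuple :
    S.Represents w t ↔
      ∃ j, w = List.replicate j (fun _ => none) ++ padTuple fun i => S.rep (t i) := by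
  constructor
  · intro h
    refine ⟨w.length - (padTuple fun i => S.rep (t i)).length, ?_⟩
    refine h.word_eq ((represents_replicate_append _).2 (represents_padTuple t)) ?_
    simp [Nat.sub_add_cancel h.length_padTuple_le]
  · rintro ⟨j, rfl⟩
    exact (represents_replicate_append j).2 (represents_padTuple t)

theorem head?_padTuple_ne (t : Fin d → ℕ) :
    (padTuple fun i => S.rep (t i)).head? ≠ some fun _ => none := by
  intro h
  obtain ⟨v, hv⟩ := List.head?_eq_some_iff.1 h
  have hrep := represents_padTuple (S := S) t
  rw [hv] at hrep
  have hvt : S.Represents v t := (represents_replicate_append 1).1 hrep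
  simpa [hv] using hvt.length_padTuple_le

end PadTuple

/-- The language of all words representing tuples in `P`. -/
def representations (S : ANS A) (P : Set (ι → ℕ)) : Set (List (ι → Option A)) :=
  {w | ∃ t ∈ P, S.Represents w t}

/-- Recognizability of a set of tuples over an arbitrary index type, with any amount of leading
padding allowed. For tuples indexed by `Fin d` it agrees with `ANS.Recognizable`, but it is easier
to work with because it is stable under adding and dropping coordinates. -/
def RecognizableRel (S : ANS A) (P : Set (ι → ℕ)) : Prop :=
  IsRegularLang (S.representations P)

theorem Represents.mem_representations_iff {P : Set (ι → ℕ)} (h : S.Represents w t) :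
    w ∈ S.representations P ↔ t ∈ P := by
  constructor
  · rintro ⟨t', ht', hw⟩
    rwa [h.tuple_eq hw]
  · exact fun ht => ⟨t, ht, h⟩

theorem recognizableRel_iff_recognizable {d : ℕ} {P : Set (Fin d → ℕ)} :
    S.RecognizableRel P ↔ S.Recognizable P := by
  constructor <;> intro h
  · unfold Recognizable
    convert h.inter (.head?_ne fun _ => none) using 1
    ext w
    constructor
    · rintro ⟨t, ht, rfl⟩
      exact ⟨⟨t, ht, represents_padTuple t⟩, head?_padTuple_ne t⟩
    · rintro ⟨⟨t, ht, hw⟩, hhead⟩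
      obtain ⟨_ | j, rfl⟩ := represents_iff_exists_eq_replicate_append_padTuple.1 hw
      · exact ⟨t, ht, rfl⟩
      · exact absurd rfl hhead
  · unfold RecognizableRel
    convert h.addPadding fun _ => none using 1
    ext w
    constructor
    · rintro ⟨t, ht, hw⟩
      obtain ⟨j, rfl⟩ := represents_iff_exists_eq_replicate_append_padTuple.1 hw
      exact ⟨j, _, ⟨t, ht, rfl⟩, rfl⟩
    · rintro ⟨j, _, ⟨t, ht, rfl⟩, rfl⟩
      exact ⟨t, ht, represents_iff_exists_eq_replicate_append_padTuple.2 ⟨j, rfl⟩⟩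

end ANS

/-! ### Recognizable sets of tuples -/

namespace ANS

variable {A : Type*} {S : ANS A} {ι κ θ : Type*}

namespace RecognizableRel

theorem image_comp [Finite ι] {P : Set (ι → ℕ)} (h : S.RecognizableRel P) (f : κ → ι) :
    S.RecognizableRel ((· ∘ f) '' P) := by
  unfold RecognizableRel
  convert (h.map fun c => c ∘ f).removePadding fun _ => none using 1
  ext w
  constructor
  · rintro ⟨_, ⟨t, ht, rfl⟩, hw⟩
    obtain ⟨N, hN⟩ := (Set.finite_range fun i => (S.rep (t i)).length).bddAbove
    obtain ⟨v, hvlen, hv⟩ := exists_represents_of_length_le (M := N + w.length)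
      fun i => (hN ⟨i, rfl⟩).trans (Nat.le_add_right _ _)
    refine ⟨N, v, ⟨t, ht, hv⟩, (hv.comp f).word_eq ((represents_replicate_append N).2 hw) ?_⟩
    simp [hvlen]
  · rintro ⟨j, v, ⟨t, ht, hv⟩, hvw⟩
    exact ⟨_, ⟨t, ht, rfl⟩, (represents_replicate_append j).1 (hvw ▸ hv.comp f)⟩

theorem exists_tuple [Finite ι] [Finite κ] {P : (ι → ℕ) → (κ → ℕ) → Prop}
    (h : S.RecognizableRel {t : ι ⊕ κ → ℕ | P (t ∘ Sum.inl) (t ∘ Sum.inr)}) :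
    S.RecognizableRel {t | ∃ s, P t s} := by
  convert h.image_comp Sum.inl using 1
  ext t
  constructor
  · rintro ⟨s, hs⟩
    exact ⟨Sum.elim t s, hs, rfl⟩
  · rintro ⟨u, hu, rfl⟩
    exact ⟨_, hu⟩

end RecognizableRel

theorem Addable.isRegularANS (hadd : S.Addable) : S.IsRegularANS := by
  unfold IsRegularANS
  convert recognizableRel_iff_recognizable.1
    ((recognizableRel_iff_recognizable.2 hadd).image_comp fun _ : Fin 1 => 2) using 1
  symm
  refine Set.eq_univ_of_forall fun t => ⟨![0, t 0, t 0], by simp, funext fun i => ?_⟩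
  simp [Fin.fin_one_eq_zero i]

theorem IsRegularANS.recognizableRel_univ (hS : S.IsRegularANS) [Finite ι] :
    S.RecognizableRel (Set.univ : Set (ι → ℕ)) := by
  have htrack (i : ι) :=
    (recognizableRel_iff_recognizable.2 hS).comap fun (c : ι → Option A) _ => c i
  unfold RecognizableRel
  convert IsRegularLang.boolean_combination htrack (fun p => ∀ i, p i) using 1
  ext w
  constructor
  · rintro ⟨t, -, hw⟩ i
    exact ⟨fun _ => t i, trivial, hw.comp fun _ : Fin 1 => i⟩
  · intro hw
    choose t _ ht using hw
    exact ⟨fun i => t i 0, trivial, fun i => by simpa [Function.comp_def] using ht i 0⟩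

namespace RecognizableRel

variable {P Q : Set (ι → ℕ)}

theorem preimage_comp [Finite κ] (hS : S.IsRegularANS) (h : S.RecognizableRel P) (f : ι → κ) :
    S.RecognizableRel {t : κ → ℕ | t ∘ f ∈ P} := by
  unfold RecognizableRel
  convert (h.comap fun c => c ∘ f).inter hS.recognizableRel_univ using 1
  ext w
  constructor
  · rintro ⟨t, ht, hw⟩
    exact ⟨⟨_, ht, hw.comp f⟩, t, trivial, hw⟩
  · rintro ⟨hwP, t, -, hw⟩
    exact ⟨t, (hw.comp f).mem_representations_iff.1 hwP, hw⟩

theorem boolean_combination [Finite ι] [Finite θ] (hS : S.IsRegularANS) {P : θ → Set (ι → ℕ)}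
    (h : ∀ a, S.RecognizableRel (P a)) (F : (θ → Prop) → Prop) :
    S.RecognizableRel {t | F fun a => t ∈ P a} := by
  unfold RecognizableRel
  convert (IsRegularLang.boolean_combination h F).inter hS.recognizableRel_univ using 1
  ext w
  constructor
  · rintro ⟨t, ht, hw⟩
    refine ⟨?_, t, trivial, hw⟩
    simpa only [Set.mem_ofPred_eq, hw.mem_representations_iff] using ht
  · rintro ⟨hwF, t, -, hw⟩
    refine ⟨t, ?_, hw⟩
    simpa only [Set.mem_ofPred_eq, hw.mem_representations_iff] using hwF

theorem iInter [Finite ι] [Finite θ] (hS : S.IsRegularANS) {P : θ → Set (ι → ℕ)}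
    (h : ∀ a, S.RecognizableRel (P a)) : S.RecognizableRel (⋂ a, P a) := by
  simpa only [Set.ofPred_forall, Set.ofPred_mem_eq] using boolean_combination hS h fun p => ∀ a, p a

theorem iUnion [Finite ι] [Finite θ] (hS : S.IsRegularANS) {P : θ → Set (ι → ℕ)}
    (h : ∀ a, S.RecognizableRel (P a)) : S.RecognizableRel (⋃ a, P a) := by
  simpa only [Set.ofPred_exists, Set.ofPred_mem_eq] using boolean_combination hS h fun p => ∃ a, p a

theorem inter [Finite ι] (hS : S.IsRegularANS) (hP : S.RecognizableRel P)
    (hQ : S.RecognizableRel Q) : S.RecognizableRel (P ∩ Q) := by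
  rw [Set.inter_eq_iInter]
  exact iInter hS (Bool.forall_bool.2 ⟨hQ, hP⟩)

theorem compl [Finite ι] (hS : S.IsRegularANS) (h : S.RecognizableRel P) :
    S.RecognizableRel Pᶜ :=
  boolean_combination (θ := Unit) hS (fun _ => h) fun p => ¬ p ()

theorem exists_nat [Finite ι] {P : (ι → ℕ) → ℕ → Prop}
    (h : S.RecognizableRel {t : ι ⊕ Unit → ℕ | P (t ∘ Sum.inl) (t (Sum.inr ()))}) :
    S.RecognizableRel {t | ∃ n, P t n} := by
  convert exists_tuple (κ := Unit) (P := fun t s => P t (s ())) h using 1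
  ext t
  exact ⟨fun ⟨n, hn⟩ => ⟨fun _ => n, hn⟩, fun ⟨s, hs⟩ => ⟨s (), hs⟩⟩

theorem forall_nat [Finite ι] (hS : S.IsRegularANS) {P : (ι → ℕ) → ℕ → Prop}
    (h : S.RecognizableRel {t : ι ⊕ Unit → ℕ | P (t ∘ Sum.inl) (t (Sum.inr ()))}) :
    S.RecognizableRel {t | ∀ n, P t n} := by
  convert (exists_nat (P := fun t n => ¬ P t n) (h.compl hS)).compl hS using 1
  ext t
  simp

end RecognizableRel

namespace Addable

variable [Finite ι]

theorem recognizableRel_add_eq (hadd : S.Addable) (i j k : ι) :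
    S.RecognizableRel {t | t i + t j = t k} :=
  (recognizableRel_iff_recognizable.2 hadd).preimage_comp hadd.isRegularANS ![i, j, k]

theorem recognizableRel_le (hadd : S.Addable) (i j : ι) : S.RecognizableRel {t | t i ≤ t j} := by
  convert RecognizableRel.exists_nat (P := fun t n => t i + n = t j)
    (hadd.recognizableRel_add_eq (.inl i) (.inr ()) (.inl j)) using 1
  ext t
  simp [le_iff_exists_add, eq_comm]

theorem recognizableRel_eq_const (hadd : S.Addable) (i : ι) (c : ℕ) :
    S.RecognizableRel {t | t i = c} := by
  have hc : S.Recognizable {fun _ : Fin 1 => c} := by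
    simpa [Recognizable] using IsRegularLang.singleton (padTuple fun _ : Fin 1 => S.rep c)
  convert (recognizableRel_iff_recognizable.2 hc).preimage_comp hadd.isRegularANS (fun _ => i)
    using 1
  ext t
  simp [funext_iff]

theorem recognizableRel_eq_add_const (hadd : S.Addable) (i j : ι) (c : ℕ) :
    S.RecognizableRel {t | t i = t j + c} := by
  convert RecognizableRel.exists_nat (P := fun t n => t j + n = t i ∧ n = c)
    ((hadd.recognizableRel_add_eq (.inl j) (.inr ()) (.inl i)).inter hadd.isRegularANS
      (hadd.recognizableRel_eq_const (.inr ()) c)) using 1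
  ext t
  simp [eq_comm]

end Addable

end ANS

/-! ### Sliding block codes -/

/-- The sliding block code with local rule `g`, reading a window of `r` letters that starts at the
current position. -/
def blockMap {C D : Type*} {r : ℕ} (g : (Fin r → C) → D) (x : ℕ → C) : ℕ → D :=
  fun n => g fun j => x (n + j)

theorem shiftMap_iterate_apply {C : Type*} (x : ℕ → C) (n i : ℕ) :
    shiftMap^[n] x i = x (n + i) := by
  induction n generalizing x with
  | zero => simp
  | succ n ih => rw [Function.iterate_succ_apply, ih, shiftMap, Nat.add_right_comm]

namespace IsSubshift

variable {C D : Type*} {X : Set (ℕ → C)} {A : Set C} {Φ : (ℕ → C) → ℕ → D}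

theorem isClosed [TopologicalSpace C] [DiscreteTopology C] (hX : IsSubshift X) : IsClosed X := by
  refine isOpen_compl_iff.1 (isOpen_iff_mem_nhds.2 fun y hy => ?_)
  obtain ⟨n, hn⟩ := not_forall.1 fun h => hy (hX.2 y h)
  refine Filter.mem_of_superset
    ((PiNat.isOpen_cylinder _ y n).mem_nhds (PiNat.self_mem_cylinder y n)) fun z hz hzX => ?_
  exact hn ⟨z, hzX, fun i hi => (hz i hi).symm⟩

theorem isCompact [TopologicalSpace C] [DiscreteTopology C] (hX : IsSubshift X) (hA : A.Finite)
    (hXA : ∀ x ∈ X, ∀ n, x n ∈ A) : IsCompact X :=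
  (isCompact_univ_pi fun _ => hA.isCompact).of_isClosed_subset hX.isClosed
    fun x hx n _ => hXA x hx n

theorem exists_window (hX : IsSubshift X) (hA : A.Finite) (hXA : ∀ x ∈ X, ∀ n, x n ∈ A)
    (hΦ : ContOn Φ X) : ∃ r, ∀ x ∈ X, ∀ x' ∈ X, (∀ j < r, x j = x' j) → Φ x 0 = Φ x' 0 := by
  let _ : TopologicalSpace C := ⊥
  have : DiscreteTopology C := ⟨rfl⟩
  have hlocal (y : X) : ∃ m, ∀ x ∈ X, x ∈ PiNat.cylinder y.1 m → Φ x 0 = Φ y.1 0 := by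
    obtain ⟨m, hm⟩ := hΦ y.1 y.2 1
    exact ⟨m, fun x hx hxy => hm x hx hxy 0 one_pos⟩
  choose m hm using hlocal
  obtain ⟨T, hT⟩ := (hX.isCompact hA hXA).elim_finite_subcover
    (fun y : X => PiNat.cylinder y.1 (m y)) (fun y => PiNat.isOpen_cylinder _ _ _)
    fun y hy => Set.mem_iUnion.2 ⟨⟨y, hy⟩, PiNat.self_mem_cylinder _ _⟩
  refine ⟨T.sup m, fun x hx x' hx' h => ?_⟩
  obtain ⟨y, hyT, hxy⟩ := Set.mem_iUnion₂.1 (hT hx)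
  have hx'y : x' ∈ PiNat.cylinder y.1 (m y) := fun j hj =>
    (h j (hj.trans_le (Finset.le_sup hyT))).symm.trans (hxy j hj)
  rw [hm y x hx hxy, hm y x' hx' hx'y]

theorem apply_shiftMap_iterate (hX : IsSubshift X)
    (hshift : ∀ x ∈ X, Φ (shiftMap x) = shiftMap (Φ x)) (n : ℕ) {x : ℕ → C} (hx : x ∈ X) :
    Φ (shiftMap^[n] x) = shiftMap^[n] (Φ x) := by
  induction n generalizing x with
  | zero => rfl
  | succ n ih =>
    rw [Function.iterate_succ_apply, Function.iterate_succ_apply, ih (hX.1 x hx), hshift x hx]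

/-- The Curtis–Hedlund–Lyndon theorem. -/
theorem exists_eqOn_blockMap [Nonempty D] (hX : IsSubshift X) (hA : A.Finite)
    (hXA : ∀ x ∈ X, ∀ n, x n ∈ A) (hΦ : ContOn Φ X)
    (hshift : ∀ x ∈ X, Φ (shiftMap x) = shiftMap (Φ x)) :
    ∃ (r : ℕ) (g : (Fin r → C) → D), Set.EqOn Φ (blockMap g) X := by
  obtain ⟨r, hr⟩ := hX.exists_window hA hXA hΦ
  obtain ⟨g, hg⟩ := (Function.factorsThrough_iff (f := fun (x : X) (j : Fin r) => x.1 j)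
    fun x => Φ x.1 0).1 fun x x' h => hr x x.2 x' x'.2 fun j hj => congrFun h ⟨j, hj⟩
  refine ⟨r, g, fun x hx => funext fun n => ?_⟩
  have hn : shiftMap^[n] x ∈ X := (show Set.MapsTo shiftMap X X from hX.1).iterate n hx
  calc Φ x n = Φ (shiftMap^[n] x) 0 := by
        rw [hX.apply_shiftMap_iterate hshift n hx, shiftMap_iterate_apply, Nat.add_zero]
    _ = g fun j => shiftMap^[n] x j := congrFun hg ⟨_, hn⟩
    _ = blockMap g x n := by simp only [shiftMap_iterate_apply, blockMap]

end IsSubshift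

section DigitSum

variable {r c d : ℕ} {g : (Fin r → ℕ) → ℕ} {x : ℕ → ℕ}

theorem blockMap_le (hg₀ : g 0 = 0) (hgc : ∀ w, g w ≤ c) (x : ℕ → ℕ) (n : ℕ) :
    blockMap g x n ≤ c * ∑ j : Fin r, x (n + j) := by
  by_cases hzero : ∀ j : Fin r, x (n + j) = 0
  · rw [blockMap, show (fun j : Fin r => x (n + j)) = 0 from funext hzero, hg₀]
    exact Nat.zero_le _
  · have hpos : 0 < ∑ j : Fin r, x (n + j) := by
      simpa [Nat.pos_iff_ne_zero, Finset.sum_eq_zero_iff] using hzero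
    exact (hgc _).trans (Nat.le_mul_of_pos_right c hpos)

theorem sum_blockMap_le (hg₀ : g 0 = 0) (hgc : ∀ w, g w ≤ c)
    (hx : ∀ F : Finset ℕ, ∑ n ∈ F, x n ≤ d) (F : Finset ℕ) :
    ∑ n ∈ F, blockMap g x n ≤ c * (r * d) := by
  have htranslate (j : Fin r) : ∑ n ∈ F, x (n + j) ≤ d := by
    simpa using hx (F.map (addRightEmbedding (j : ℕ)))
  calc ∑ n ∈ F, blockMap g x n ≤ ∑ n ∈ F, c * ∑ j : Fin r, x (n + j) :=
        Finset.sum_le_sum fun n _ => blockMap_le hg₀ hgc x n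
    _ = c * ∑ j : Fin r, ∑ n ∈ F, x (n + j) := by rw [← Finset.mul_sum, Finset.sum_comm]
    _ ≤ c * (r * d) := by
        gcongr
        simpa using Finset.sum_le_card_nsmul _ _ _ fun j (_ : j ∈ Finset.univ) => htranslate j

theorem finite_support_of_sum_le (hx : ∀ F : Finset ℕ, ∑ n ∈ F, x n ≤ d) :
    (Function.support x).Finite := by
  by_contra hinf
  obtain ⟨F, hF, hcard⟩ := Set.Infinite.exists_subset_card_eq hinf (d + 1)
  have hle : F.card • 1 ≤ ∑ n ∈ F, x n :=
    Finset.card_nsmul_le_sum _ _ _ fun n hn => Nat.one_le_iff_ne_zero.2 (hF hn)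
  have := hx F
  rw [hcard, smul_eq_mul, mul_one] at hle
  omega

theorem FiniteCodingDim.image_blockMap {X : Set (ℕ → ℕ)} (hX : FiniteCodingDim X)
    (hg₀ : g 0 = 0) (hgc : ∀ w, g w ≤ c) : FiniteCodingDim (blockMap g '' X) := by
  obtain ⟨d, hd⟩ := hX
  refine ⟨c * (r * d), ?_⟩
  rintro _ ⟨x, hx, rfl⟩
  exact sum_blockMap_le hg₀ hgc (hd x hx)

end DigitSum

/-! ### Codability -/

/-- The word over `ℕ` whose letter at position `j` is the number of occurrences of `j` in the tuple
`t`. It inverts `ν` on monotone tuples, so `nuSet Y k` consists of the monotone `t : Fin k → ℕ`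
with `countWord t ∈ Y`. -/
noncomputable def countWord {ι : Type*} (t : ι → ℕ) : ℕ → ℕ := fun j => Set.ncard {i | t i = j}

theorem countWord_eq_card_filter {ι : Type*} [Fintype ι] (t : ι → ℕ) (j : ℕ) :
    countWord t j = (Finset.univ.filter fun i => t i = j).card := by
  simp [countWord, Set.ncard_eq_toFinset_card']

theorem countWord_get (l : List ℕ) (j : ℕ) : countWord l.get j = l.count j := by
  rw [countWord_eq_card_filter]
  exact Fin.card_filter_univ_eq_vector_get_eq_count j ⟨l, rfl⟩

theorem sum_countWord_le {ι : Type*} [Fintype ι] (t : ι → ℕ) (F : Finset ℕ) :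
    ∑ j ∈ F, countWord t j ≤ Fintype.card ι := by
  simp only [countWord_eq_card_filter, Finset.sum_card_fiberwise_eq_card_filter]
  exact Finset.card_le_univ _

theorem exists_monotone_countWord_eq {x : ℕ → ℕ} {d : ℕ}
    (hx : ∀ F : Finset ℕ, ∑ n ∈ F, x n ≤ d) :
    ∃ m ≤ d, ∃ t : Fin m → ℕ, Monotone t ∧ countWord t = x := by
  let f : ℕ →₀ ℕ := Finsupp.ofSupportFinite x (finite_support_of_sum_le hx)
  let l : List ℕ := (Finsupp.toMultiset f).sort (· ≤ ·)
  have hcount (j : ℕ) : l.count j = x j := by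
    rw [← Multiset.coe_count, Multiset.sort_eq, Finsupp.count_toMultiset]
    rfl
  refine ⟨l.length, ?_, l.get, (Multiset.pairwise_sort _ _).sortedLE.monotone_get, ?_⟩
  · rw [Multiset.length_sort, Finsupp.card_toMultiset]
    exact hx _
  · funext j
    rw [countWord_get, hcount]

namespace ANS.Addable

variable {A : Type*} {S : ANS A} {ι κ : Type*} [Finite ι]

theorem recognizableRel_monotone [Preorder ι] (hadd : S.Addable) :
    S.RecognizableRel {t : ι → ℕ | Monotone t} :=
  .boolean_combination hadd.isRegularANS (fun p : ι × ι => hadd.recognizableRel_le p.1 p.2)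
    fun q => ∀ ⦃i j⦄, i ≤ j → q (i, j)

theorem recognizableRel_countWord_eq_blockMap [Finite κ] (hadd : S.Addable) {r : ℕ}
    (g : (Fin r → ℕ) → ℕ) :
    S.RecognizableRel {t : ι ⊕ κ → ℕ |
      countWord (t ∘ Sum.inl) = blockMap g (countWord (t ∘ Sum.inr))} := by
  simp only [funext_iff]
  refine .forall_nat hadd.isRegularANS ?_
  exact .boolean_combination hadd.isRegularANS
    (P := Sum.elim
      (fun i => {t : (ι ⊕ κ) ⊕ Unit → ℕ | t (.inl (.inl i)) = t (.inr ()) + 0})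
      fun p : κ × Fin r => {t | t (.inl (.inr p.1)) = t (.inr ()) + p.2})
    (Sum.rec (fun _ => hadd.recognizableRel_eq_add_const _ _ _)
      fun _ => hadd.recognizableRel_eq_add_const _ _ _)
    fun q => Set.ncard {i | q (.inl i)} = g fun j => Set.ncard {i | q (.inr (i, j))}

theorem recognizableRel_exists_countWord_eq_blockMap [Finite κ] (hadd : S.Addable) {r : ℕ}
    (g : (Fin r → ℕ) → ℕ) {P : Set (κ → ℕ)} (hP : S.RecognizableRel P) :
    S.RecognizableRel {t : ι → ℕ | ∃ s ∈ P, countWord t = blockMap g (countWord s)} :=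
  .exists_tuple ((hP.preimage_comp hadd.isRegularANS Sum.inr).inter hadd.isRegularANS
    (hadd.recognizableRel_countWord_eq_blockMap g))

end ANS.Addable

section Codability

variable {X : Set (ℕ → ℕ)} {q r c : ℕ} {g : (Fin q → ℕ) → ℕ} {h : (Fin r → ℕ) → ℕ}

theorem nuSet_image_blockMap (hh₀ : h 0 = 0) (hhc : ∀ w, h w ≤ c)
    (hinv : Set.LeftInvOn (blockMap h) (blockMap g) X) (k : ℕ) :
    nuSet (blockMap g '' X) k = {t | Monotone t} ∩ ⋃ m : Fin (c * (r * k) + 1),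
      {t | ∃ s ∈ nuSet X m, countWord t = blockMap g (countWord s)} := by
  refine Set.ext fun t => and_congr_right fun _ => ?_
  simp only [Set.mem_iUnion, Set.mem_ofPred_eq]
  constructor
  · rintro ⟨x, hx, hxt⟩
    have hsum : ∀ F : Finset ℕ, ∑ n ∈ F, x n ≤ c * (r * k) := by
      rw [← hinv hx, hxt]
      exact sum_blockMap_le hh₀ hhc fun F => (sum_countWord_le t F).trans_eq (Fintype.card_fin k)
    obtain ⟨m, hm, s, hs, rfl⟩ := exists_monotone_countWord_eq hsum
    exact ⟨⟨m, Nat.lt_succ_of_le hm⟩, s, ⟨hs, hx⟩, hxt.symm⟩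
  · rintro ⟨m, s, ⟨-, hs⟩, hst⟩
    exact ⟨countWord s, hs, hst.symm⟩

theorem WeaklySCodable.image_blockMap {A : Type*} {S : ANS A} (hX : WeaklySCodable S X)
    (hadd : S.Addable) (hh₀ : h 0 = 0) (hhc : ∀ w, h w ≤ c)
    (hinv : Set.LeftInvOn (blockMap h) (blockMap g) X) :
    WeaklySCodable S (blockMap g '' X) := by
  intro k
  rw [← ANS.recognizableRel_iff_recognizable, nuSet_image_blockMap hh₀ hhc hinv]
  exact hadd.recognizableRel_monotone.inter hadd.isRegularANS <|
    .iUnion hadd.isRegularANS fun m =>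
      hadd.recognizableRel_exists_countWord_eq_blockMap g
        (ANS.recognizableRel_iff_recognizable.2 (hX m))

end Codability

theorem exists_blockMap_pair_of_conjugacy {B : Type*} [Finite B] [Nonempty B] {C : Type*}
    [Nonempty C] {X : Set (ℕ → C)} {Y : Set (ℕ → B)} (hX : IsSubshift X) (hY : IsSubshift Y)
    {φ : (ℕ → B) → ℕ → C} {ψ : (ℕ → C) → ℕ → B} (hψX : Set.MapsTo ψ X Y)
    (hφcont : ContOn φ Y) (hψcont : ContOn ψ X) (hinv₁ : Set.LeftInvOn ψ φ Y)
    (hinv₂ : Set.LeftInvOn φ ψ X) (hshift : ∀ y ∈ Y, φ (shiftMap y) = shiftMap (φ y)) :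
    ∃ (r : ℕ) (h : (Fin r → B) → C) (q : ℕ) (g : (Fin q → C) → B),
      Set.EqOn φ (blockMap h) Y ∧ Set.EqOn ψ (blockMap g) X := by
  obtain ⟨r, h, hφ⟩ :=
    hY.exists_eqOn_blockMap Set.finite_univ (fun _ _ _ => trivial) hφcont hshift
  have hψshift : ∀ x ∈ X, ψ (shiftMap x) = shiftMap (ψ x) := fun x hx => by
    rw [← hinv₁ (hY.1 _ (hψX hx)), hshift _ (hψX hx), hinv₂ hx]
  have hletters : ∀ x ∈ X, ∀ n, x n ∈ Set.range h := fun x hx n => by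
    rw [← hinv₂ hx, hφ (hψX hx)]
    exact ⟨_, rfl⟩
  obtain ⟨q, g, hψ⟩ := hX.exists_eqOn_blockMap (Set.finite_range h) hletters hψcont hψshift
  exact ⟨r, h, q, g, hφ, hψ⟩

theorem exists_equivFin_apply_eq_zero {B : Type*} [Fintype B] (b : B) :
    ∃ π : B ≃ Fin (Fintype.card B), (π b : ℕ) = 0 := by
  have : NeZero (Fintype.card B) := ⟨(Fintype.card_pos_iff.2 ⟨b⟩).ne'⟩
  let e := Fintype.equivFin B
  exact ⟨e.trans (Equiv.swap (e b) 0), by simp⟩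

theorem stmt19_general {A' : Type*} (S : ANS A') (hadd : S.Addable)
    (X : Set (ℕ → ℕ)) (hXsub : IsSubshift X)
    {B : Type*} [Finite B] (Y : Set (ℕ → B)) (hYsub : IsSubshift Y)
    (φ : (ℕ → B) → (ℕ → ℕ)) (ψ : (ℕ → ℕ) → (ℕ → B))
    (hφY : Set.MapsTo φ Y X) (hψX : Set.MapsTo ψ X Y)
    (hφcont : ContOn φ Y) (hψcont : ContOn ψ X)
    (hinv₁ : ∀ y ∈ Y, ψ (φ y) = y) (hinv₂ : ∀ x ∈ X, φ (ψ x) = x)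
    (hshift : ∀ y ∈ Y, φ (shiftMap y) = shiftMap (φ y))
    (b : B) (hbY : (fun _ => b) ∈ Y) (hb0 : φ (fun _ => b) = fun _ => 0)
    (π : B → ℕ) (hπ : Function.Injective π) (hπb : π b = 0) :
    (WeaklySCodable S X → WeaklySCodable S ((π ∘ ·) '' Y)) ∧
      (SCodable S X → SCodable S ((π ∘ ·) '' Y)) := by
  have : Nonempty B := ⟨b⟩
  obtain ⟨r, h, q, g, hφ, hψ⟩ := exists_blockMap_pair_of_conjugacy hXsub hYsub hψX hφcont hψcont
    hinv₁ hinv₂ hshift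
  have hdecode : Function.LeftInverse (Function.invFun π) π := Function.leftInverse_invFun hπ
  let g' : (Fin q → ℕ) → ℕ := fun w => π (g w)
  let h' : (Fin r → ℕ) → ℕ := fun w => h (Function.invFun π ∘ w)
  have hg'X : ∀ x ∈ X, blockMap g' x = π ∘ ψ x := fun x hx => by rw [hψ hx]; rfl
  have hg'₀ : g' 0 = 0 :=
    calc g' 0 = blockMap g' (φ fun _ => b) 0 := by rw [hb0]; rfl
      _ = 0 := by rw [hg'X _ (hφY hbY), hinv₁ _ hbY, Function.comp_apply, hπb]
  have hh'₀ : h' 0 = 0 :=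
    calc h' 0 = h fun _ => Function.invFun π (π b) := by rw [hπb]; rfl
      _ = blockMap h (fun _ => b) 0 := by rw [hdecode b]; rfl
      _ = 0 := by rw [← hφ hbY, hb0]
  have hinv : Set.LeftInvOn (blockMap h') (blockMap g') X := fun x hx =>
    calc blockMap h' (blockMap g' x) = blockMap h (Function.invFun π ∘ π ∘ ψ x) := by
          rw [hg'X x hx]; rfl
      _ = x := by rw [← Function.comp_assoc, hdecode.comp_eq_id, Function.id_comp,
          ← hφ (hψX hx), hinv₂ x hx]
  have himage : (π ∘ ·) '' Y = blockMap g' '' X := by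
    rw [Set.image_congr hg'X, ← (Set.LeftInvOn.surjOn hinv₁ hφY).image_eq_of_mapsTo hψX,
      Set.image_image]
  obtain ⟨c, hc⟩ := (Set.finite_range h).bddAbove
  obtain ⟨c', hc'⟩ := (Set.finite_range π).bddAbove
  have hweak (hX : WeaklySCodable S X) :=
    hX.image_blockMap hadd hh'₀ (fun w => hc ⟨_, rfl⟩) hinv
  rw [himage]
  exact ⟨hweak, fun hX => ⟨hweak hX.1, hX.2.image_blockMap hg'₀ fun w => hc' ⟨_, rfl⟩⟩⟩

/-- Weak `S`-codability and `S`-codability of subshifts (for addable `S`)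
are preserved under conjugacies mapping the zero point to the zero point. -/
theorem stmt19 {A' : Type} [Fintype A'] (S : ANS A') (hadd : S.Addable)
    (A : Finset ℕ) (h0A : (0 : ℕ) ∈ A)
    (X : Set (ℕ → ℕ)) (hXsub : IsSubshift X) (hXA : ∀ x ∈ X, ∀ n : ℕ, x n ∈ A)
    {B : Type} [Fintype B] (Y : Set (ℕ → B)) (hYsub : IsSubshift Y)
    (φ : (ℕ → B) → (ℕ → ℕ)) (ψ : (ℕ → ℕ) → (ℕ → B))
    (hφY : Set.MapsTo φ Y X) (hψX : Set.MapsTo ψ X Y)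
    (hφcont : ContOn φ Y) (hψcont : ContOn ψ X)
    (hinv₁ : ∀ y ∈ Y, ψ (φ y) = y) (hinv₂ : ∀ x ∈ X, φ (ψ x) = x)
    (hshift : ∀ y ∈ Y, φ (shiftMap y) = shiftMap (φ y))
    (b : B) (hbY : (fun _ => b) ∈ Y) (hb0 : φ (fun _ => b) = fun _ => 0) :
    (WeaklySCodable S X →
      ∃ π : B ≃ Fin (Fintype.card B), (π b : ℕ) = 0 ∧
        WeaklySCodable S ((fun y : ℕ → B => fun n => ((π (y n) : ℕ))) '' Y)) ∧
    (SCodable S X →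
      ∃ π : B ≃ Fin (Fintype.card B), (π b : ℕ) = 0 ∧
        SCodable S ((fun y : ℕ → B => fun n => ((π (y n) : ℕ))) '' Y)) := by
  obtain ⟨π, hπb⟩ := exists_equivFin_apply_eq_zero b
  have h := stmt19_general S hadd X hXsub Y hYsub φ ψ hφY hψX hφcont hψcont hinv₁ hinv₂ hshift
    b hbY hb0 (fun c => (π c : ℕ)) (Fin.val_injective.comp π.injective) hπb
  exact ⟨fun hX => ⟨π, hπb, h.1 hX⟩, fun hX => ⟨π, hπb, h.2 hX⟩⟩
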